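/- arXiv:1111.7263 — 2 statements merged into one kernel-verified Lean document; each statement's English description precedes it below -/
import Mathlib

section
/- Let t ≥ 1, d ≥ 3, and let λ be a (t,d)-admissible partition, written with d entries λ₁ ≥ λ₂ ≥ … ≥ λ_d ≥ 0 (padding with zeros if necessary). Then the following are equivalent: (ii) λ has a unique t-predecessor λ′, and λ′ has a unique t-predecessor; (iii) λ₂ = λ₃ = … = λ_d, or λ₁ = λ₂ = … = λ_{d−1}. -/
/-- A `(t,d)`-admissible partition, encoded as a weakly decreasing function `ℕ → ℕ`
(0-indexed parts, padded with zeros): it has at most `d` nonzero parts and its parts sum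
to `t·d`. -/
def IsAdmissible (t d : ℕ) (lam : ℕ → ℕ) : Prop :=
  (∀ ⦃i j : ℕ⦄, i ≤ j → lam j ≤ lam i) ∧ (∀ i, d ≤ i → lam i = 0) ∧
    (∑ i ∈ Finset.range d, lam i) = t * d

/-- `α` is a `t`-predecessor of the `(t,d)`-admissible partition `lam`:
`α` is `(t,d−1)`-admissible, `α₁ ≤ λ₁ ≤ α₁ + t`, and `α_i ≤ λ_i ≤ α_{i−1}` for `i ≥ 2`
(in 0-indexed form: `α i ≤ lam i ≤ α (i-1)` for all `i ≥ 1`). -/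
def IsPred (t d : ℕ) (α lam : ℕ → ℕ) : Prop :=
  IsAdmissible t (d - 1) α ∧ α 0 ≤ lam 0 ∧ lam 0 ≤ α 0 + t ∧
    ∀ i, 1 ≤ i → α i ≤ lam i ∧ lam i ≤ α (i - 1)

/-!
A predecessor of `lam` with `n + 1` parts is a point of the box
`lam (i + 1) ≤ α i ≤ lam i` (with the extra lower bound `lam 0 - t` at `i = 0`) whose
coordinates have sum `t * n`. Such a point can be moved by transferring one unit between two
coordinates, so it is unique only if it is a corner of the box or at most one side of the box is
nondegenerate. Either way `lam` consists of at most two constant blocks, and then its predecessor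
arises by merging the last part `a` of the first block and the first part `b` of the second into
`a + b - t`. If both blocks have at least two parts, the merged sequence contains
`a, a + b - t, b`, which forms two blocks only when `a = t` or `b = t`, and then `lam` is constant.
-/

section Box

variable {ι : Type*} {s : Finset ι} {l u α : ι → ℕ} {i j : ι}

theorem exists_ne_mem_box_sum_eq (hbox : ∀ x ∈ s, α x ∈ Set.Icc (l x) (u x))
    (hi : i ∈ s) (hj : j ∈ s) (hij : i ≠ j) (hiu : α i < u i) (hjl : l j < α j) :
    ∃ β ≠ α, (∀ x ∈ s, β x ∈ Set.Icc (l x) (u x)) ∧ (∀ x ∉ s, β x = α x) ∧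
      ∑ x ∈ s, β x = ∑ x ∈ s, α x := by
  classical
  set β : ι → ℕ := Function.update (Function.update α i (α i + 1)) j (α j - 1) with hβ
  have β_i : β i = α i + 1 := by simp [hβ, hij]
  have β_of_ne : ∀ x, x ≠ i → x ≠ j → β x = α x := fun x hxi hxj => by simp [hβ, hxi, hxj]
  have htransfer : β + Pi.single j 1 = α + Pi.single i 1 := by
    funext x
    obtain rfl | hxj := eq_or_ne x j
    · simpa [hβ, hij.symm] using Nat.sub_add_cancel (Nat.one_le_of_lt hjl)
    obtain rfl | hxi := eq_or_ne x i
    · simp [β_i, hxj]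
    · simp [β_of_ne x hxi hxj, hxi, hxj]
  refine ⟨β, fun h => by simp [h] at β_i, fun x hx => ?_, fun x hx => ?_, ?_⟩
  · have hx_box := hbox x hx
    obtain rfl | hxj := eq_or_ne x j
    · simp only [hβ, Function.update_self, Set.mem_Icc] at hx_box ⊢
      omega
    obtain rfl | hxi := eq_or_ne x i
    · simp only [β_i, Set.mem_Icc] at hx_box ⊢
      omega
    · rwa [β_of_ne x hxi hxj]
  · exact β_of_ne x (fun h => hx (h ▸ hi)) fun h => hx (h ▸ hj)
  · have hsum := congrArg (fun f : ι → ℕ => ∑ x ∈ s, f x) htransfer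
    simpa [Finset.sum_add_distrib, Finset.sum_pi_single', hi, hj] using hsum

theorem eq_lower_or_eq_upper_or_forall_ne_eq_of_unique (hbox : ∀ x ∈ s, α x ∈ Set.Icc (l x) (u x))
    (huniq : ∀ β : ι → ℕ, (∀ x ∈ s, β x ∈ Set.Icc (l x) (u x)) → (∀ x ∉ s, β x = α x) →
      ∑ x ∈ s, β x = ∑ x ∈ s, α x → β = α) :
    (∀ x ∈ s, α x = l x) ∨ (∀ x ∈ s, α x = u x) ∨ ∃ j ∈ s, ∀ x ∈ s, x ≠ j → l x = u x := by
  have no_transfer : ∀ i ∈ s, ∀ j ∈ s, α i < u i → l j < α j → i = j := by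
    intro i hi j hj hiu hjl
    by_contra hij
    obtain ⟨β, hne, hβ, hoff, hsum⟩ := exists_ne_mem_box_sum_eq hbox hi hj hij hiu hjl
    exact hne (huniq β hβ hoff hsum)
  by_contra! ⟨⟨j, hj, hjl⟩, ⟨i, hi, hiu⟩, hfree⟩
  replace hjl : l j < α j := (hbox j hj).1.lt_of_ne' hjl
  replace hiu : α i < u i := (hbox i hi).2.lt_of_ne hiu
  obtain rfl := no_transfer i hi j hj hiu hjl
  obtain ⟨x, hx, hxi, hne⟩ := hfree i hi
  have hxu : α x = u x :=
    (hbox x hx).2.eq_of_not_lt fun hlt => hxi (no_transfer x hx i hi hlt hjl)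
  have hxl : l x = α x :=
    (hbox x hx).1.eq_of_not_lt fun hlt => hxi (no_transfer i hi x hx hiu hlt).symm
  exact hne (hxl.trans hxu)

theorem forall_eq_of_sum_eq_of_forall_ne_eq {M : Type*} [AddCommMonoid M] [IsRightCancelAdd M]
    {f g : ι → M} (hj : j ∈ s) (hsum : ∑ x ∈ s, f x = ∑ x ∈ s, g x)
    (hne : ∀ x ∈ s, x ≠ j → f x = g x) : ∀ x ∈ s, f x = g x := by
  classical
  have hfj : f j = g j := by
    rw [← Finset.add_sum_erase s f hj, ← Finset.add_sum_erase s g hj,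
      Finset.sum_congr rfl fun x hx =>
        hne x (Finset.mem_of_mem_erase hx) (Finset.ne_of_mem_erase hx)] at hsum
    exact add_right_cancel hsum
  intro x hx
  obtain rfl | hxj := eq_or_ne x j
  · exact hfj
  · exact hne x hx hxj

end Box

/-- The entries `lam 0, …, lam n` form at most two constant blocks: consecutive entries agree,
except possibly at positions `j` and `j + 1`. -/
def IsTwoBlock {X : Type*} (n j : ℕ) (lam : ℕ → X) : Prop :=
  ∀ i < n, i ≠ j → lam (i + 1) = lam i

namespace IsTwoBlock

variable {X : Type*} {n j i : ℕ} {lam : ℕ → X}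

theorem of_forall_eq {c : X} (h : ∀ i ∈ Finset.range (n + 1), lam i = c) (j : ℕ) :
    IsTwoBlock n j lam := fun i hi _ =>
  (h (i + 1) (Finset.mem_range.2 (by omega))).trans (h i (Finset.mem_range.2 (by omega))).symm

theorem eq_head (h : IsTwoBlock n j lam) (hj : j ≤ n) (hi : i ≤ j) : lam i = lam 0 := by
  induction i with
  | zero => rfl
  | succ i ih => rw [h i (by omega) (by omega), ih (by omega)]

theorem eq_last (h : IsTwoBlock n j lam) (hi : j < i) (hin : i ≤ n) : lam i = lam n := by
  induction hin using Nat.decreasingInduction with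
  | self => rfl
  | of_succ i hin ih => rw [← h i hin (by omega), ih (by omega)]

end IsTwoBlock

theorem isTwoBlock_zero_iff {X : Type*} {n : ℕ} {lam : ℕ → X} :
    IsTwoBlock n 0 lam ↔ ∀ i, 1 ≤ i → i < n + 1 → lam i = lam 1 := by
  refine ⟨fun h i hi hin => ?_, fun h i hin hi => ?_⟩
  · rw [h.eq_last hi (by omega), h.eq_last one_pos (by omega)]
  · rw [h (i + 1) (by omega) (by omega), h i (by omega) (by omega)]

theorem isTwoBlock_last_iff {X : Type*} {n : ℕ} {lam : ℕ → X} :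
    IsTwoBlock (n + 1) n lam ↔ ∀ i, i < n + 1 → lam i = lam 0 := by
  refine ⟨fun h i hi => h.eq_head (by omega) (by omega), fun h i hin hi => ?_⟩
  rw [h (i + 1) (by omega), h i (by omega)]

namespace IsAdmissible

variable {t n : ℕ} {lam : ℕ → ℕ}

theorem le_head (h : IsAdmissible t (n + 1) lam) : t ≤ lam 0 := by
  have hsum := Finset.sum_le_card_nsmul (Finset.range (n + 1)) lam (lam 0)
    fun i _ => h.1 (Nat.zero_le i)
  rw [h.2.2, Finset.card_range, smul_eq_mul, mul_comm] at hsum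
  exact Nat.le_of_mul_le_mul_left hsum n.succ_pos

theorem last_le (h : IsAdmissible t (n + 1) lam) : lam n ≤ t := by
  have hsum := Finset.card_nsmul_le_sum (Finset.range (n + 1)) lam (lam n)
    fun i hi => h.1 (Finset.mem_range_succ_iff.1 hi)
  rw [h.2.2, Finset.card_range, smul_eq_mul, mul_comm t] at hsum
  exact Nat.le_of_mul_le_mul_left hsum n.succ_pos

theorem sum_eq_sum_const (h : IsAdmissible t n lam) :
    ∑ i ∈ Finset.range n, lam i = ∑ _i ∈ Finset.range n, t := by
  rw [h.2.2, Finset.sum_const, Finset.card_range, smul_eq_mul, mul_comm]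

theorem isTwoBlock_of_head_eq (h : IsAdmissible t (n + 1) lam) (h0 : lam 0 = t) (j : ℕ) :
    IsTwoBlock n j lam :=
  IsTwoBlock.of_forall_eq ((Finset.sum_eq_sum_iff_of_le fun i _ => h0 ▸ h.1 (Nat.zero_le i)).1
    h.sum_eq_sum_const) j

theorem isTwoBlock_of_last_eq (h : IsAdmissible t (n + 1) lam) (hn : lam n = t) (j : ℕ) :
    IsTwoBlock n j lam :=
  IsTwoBlock.of_forall_eq (fun _ hi => ((Finset.sum_eq_sum_iff_of_le
    fun _ hi => hn ▸ h.1 (Finset.mem_range_succ_iff.1 hi)).1 h.sum_eq_sum_const.symm _ hi).symm) j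

end IsAdmissible

section Pred

variable {t n j : ℕ} {α lam : ℕ → ℕ}

/-- The lower bounds that the interlacing conditions of `IsPred` impose on a predecessor of
`lam`; at index `0` they combine `lam 1 ≤ α 0` with `lam 0 ≤ α 0 + t`. -/
def predLower (t : ℕ) (lam : ℕ → ℕ) (i : ℕ) : ℕ :=
  if i = 0 then max (lam 1) (lam 0 - t) else lam (i + 1)

theorem predLower_zero : predLower t lam 0 = max (lam 1) (lam 0 - t) := if_pos rfl

theorem predLower_of_ne_zero {i : ℕ} (hi : i ≠ 0) : predLower t lam i = lam (i + 1) := if_neg hi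

theorem predLower_le_iff {i x : ℕ} :
    predLower t lam i ≤ x ↔ lam (i + 1) ≤ x ∧ (i = 0 → lam 0 ≤ x + t) := by
  obtain rfl | hi := eq_or_ne i 0
  · simp [predLower_zero]
  · simp [predLower_of_ne_zero hi, hi]

theorem isPred_iff_mem_box (hn : 0 < n) (hlam : IsAdmissible t (n + 1) lam) :
    IsPred t (n + 1) α lam ↔ (∀ i, n ≤ i → α i = 0) ∧ ∑ i ∈ Finset.range n, α i = t * n ∧
      ∀ i ∈ Finset.range n, α i ∈ Set.Icc (predLower t lam i) (lam i) := by
  simp only [Set.mem_Icc, predLower_le_iff, Finset.mem_range]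
  constructor
  · rintro ⟨⟨-, hzero, hsum⟩, hle, hlt, hinterlace⟩
    refine ⟨hzero, hsum, fun i _ => ⟨⟨(hinterlace (i + 1) (by omega)).2, ?_⟩, ?_⟩⟩
    · rintro rfl
      exact hlt
    · obtain rfl | hi := Nat.eq_zero_or_pos i
      · exact hle
      · exact (hinterlace i hi).1
  · rintro ⟨hzero, hsum, hbox⟩
    have hupper : ∀ i, α i ≤ lam i := fun i => by
      obtain hi | hi := lt_or_ge i n
      · exact (hbox i hi).2
      · simp only [hzero i hi, Nat.zero_le]
    have hlower : ∀ i, lam (i + 1) ≤ α i := fun i => by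
      obtain hi | hi := lt_or_ge i n
      · exact (hbox i hi).1.1
      · simp only [hlam.2.1 (i + 1) (by omega), Nat.zero_le]
    have hanti : Antitone α := antitone_nat_of_succ_le fun i => (hupper (i + 1)).trans (hlower i)
    refine ⟨⟨fun _ _ hij => hanti hij, hzero, hsum⟩, hupper 0, (hbox 0 hn).1.2 rfl,
      fun i hi => ⟨hupper i, ?_⟩⟩
    simpa only [Nat.sub_add_cancel hi] using hlower (i - 1)

/-- The sequence obtained from `lam` by replacing the two entries at positions `j` and `j + 1` by
the single entry `lam j + lam (j + 1) - t`; for suitable `j` this is a predecessor of `lam`. The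
truncated subtraction is harmless there, as `t ≤ lam j`. -/
def mergeAt (t j : ℕ) (lam : ℕ → ℕ) (i : ℕ) : ℕ :=
  if i < j then lam i else if i = j then lam j + lam (j + 1) - t else lam (i + 1)

theorem mergeAt_of_lt {i : ℕ} (hi : i < j) : mergeAt t j lam i = lam i := if_pos hi

theorem mergeAt_self : mergeAt t j lam j = lam j + lam (j + 1) - t := by simp [mergeAt]

theorem mergeAt_of_gt {i : ℕ} (hi : j < i) : mergeAt t j lam i = lam (i + 1) := by
  rw [mergeAt, if_neg hi.not_gt, if_neg hi.ne']

theorem sum_mergeAt_add (hj : j < n) (htj : t ≤ lam j + lam (j + 1)) :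
    ∑ i ∈ Finset.range n, mergeAt t j lam i + t = ∑ i ∈ Finset.range (n + 1), lam i := by
  induction n, hj using Nat.le_induction with
  | base =>
    have hinit : ∑ i ∈ Finset.range j, mergeAt t j lam i = ∑ i ∈ Finset.range j, lam i :=
      Finset.sum_congr rfl fun i hi => mergeAt_of_lt (Finset.mem_range.1 hi)
    simp only [Nat.succ_eq_add_one, Finset.sum_range_succ, hinit, mergeAt_self]
    omega
  | succ n hn ih =>
    rw [Finset.sum_range_succ, mergeAt_of_gt hn, add_right_comm, ih,
      Finset.sum_range_succ _ (n + 1)]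

theorem isPred_mergeAt (hlam : IsAdmissible t (n + 1) lam) (hj : j < n) (hle : lam (j + 1) ≤ t)
    (hge : t ≤ lam j) : IsPred t (n + 1) (mergeAt t j lam) lam := by
  refine (isPred_iff_mem_box (by omega) hlam).2 ⟨fun i hi => ?_, ?_, fun i _ => ?_⟩
  · rw [mergeAt_of_gt (by omega), hlam.2.1 (i + 1) (by omega)]
  · have hsum := sum_mergeAt_add hj (le_add_right hge)
    rw [hlam.2.2, Nat.mul_succ] at hsum
    exact Nat.add_right_cancel hsum
  · have hstep : lam (i + 1) ≤ lam i := hlam.1 i.le_succ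
    rw [Set.mem_Icc, predLower_le_iff]
    obtain hij | rfl | hij := lt_trichotomy i j
    · rw [mergeAt_of_lt hij]
      exact ⟨⟨hstep, fun h0 => h0 ▸ Nat.le_add_right _ _⟩, le_rfl⟩
    · rw [mergeAt_self]
      refine ⟨⟨by omega, ?_⟩, by omega⟩
      rintro rfl
      omega
    · rw [mergeAt_of_gt hij]
      exact ⟨⟨le_rfl, by omega⟩, hstep⟩

theorem IsTwoBlock.isPred_iff (h : IsTwoBlock n j lam) (hlam : IsAdmissible t (n + 1) lam)
    (hj : j < n) : IsPred t (n + 1) α lam ↔ α = mergeAt t j lam := by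
  have hmerge : IsPred t (n + 1) (mergeAt t j lam) lam := by
    refine isPred_mergeAt hlam hj ?_ ?_
    · exact (h.eq_last j.lt_succ_self hj).trans_le hlam.last_le
    · exact hlam.le_head.trans_eq (h.eq_head hj.le le_rfl).symm
  refine ⟨fun hα => ?_, fun hα => hα ▸ hmerge⟩
  have eq_of_ne : ∀ {β}, IsPred t (n + 1) β lam → ∀ i < n, i ≠ j → β i = lam i := by
    rintro β ⟨-, hle, -, hinterlace⟩ i hi hij
    have hlower : lam i ≤ β i := h i hi hij ▸ (hinterlace (i + 1) (by omega)).2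
    cases i with
    | zero => exact hle.antisymm hlower
    | succ i => exact (hinterlace (i + 1) (by omega)).1.antisymm hlower
  have hon := forall_eq_of_sum_eq_of_forall_ne_eq (Finset.mem_range.2 hj)
    (hα.1.2.2.trans hmerge.1.2.2.symm) fun i hi hij =>
      (eq_of_ne hα i (Finset.mem_range.1 hi) hij).trans
        (eq_of_ne hmerge i (Finset.mem_range.1 hi) hij).symm
  funext i
  obtain hi | hi := lt_or_ge i n
  · exact hon i (Finset.mem_range.2 hi)
  · rw [hα.1.2.1 i hi, hmerge.1.2.1 i hi]

theorem isTwoBlock_zero_of_sum_predLower_eq (hn : 0 < n) (hlam : IsAdmissible t (n + 1) lam)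
    (hsum : ∑ i ∈ Finset.range n, predLower t lam i = t * n) : IsTwoBlock n 0 lam := by
  obtain ⟨m, rfl⟩ := Nat.exists_eq_add_one.2 hn
  have hlam_sum := hlam.2.2
  rw [Finset.sum_range_succ', Finset.sum_range_succ', Nat.mul_succ] at hlam_sum
  rw [Finset.sum_range_succ', predLower_zero,
    Finset.sum_congr rfl fun i _ => predLower_of_ne_zero i.succ_ne_zero] at hsum
  simp only [zero_add] at hlam_sum
  obtain h0 | h1 : lam 0 = t ∨ lam 1 = 0 := by
    have := hlam.le_head
    omega
  · exact hlam.isTwoBlock_of_head_eq h0 0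
  · have hzero : ∀ i, 1 ≤ i → lam i = 0 := fun i hi => Nat.le_zero.1 (h1 ▸ hlam.1 hi)
    exact isTwoBlock_zero_iff.2 fun i hi _ => by rw [hzero i hi, h1]

theorem existsUnique_isPred_iff (ht : 0 < t) (hn : 0 < n) (hlam : IsAdmissible t (n + 1) lam) :
    (∃! α, IsPred t (n + 1) α lam) ↔ ∃ j < n, IsTwoBlock n j lam := by
  refine ⟨fun ⟨α, hα, huniq⟩ => ?_, fun ⟨j, hj, h⟩ =>
    ⟨mergeAt t j lam, (h.isPred_iff hlam hj).2 rfl, fun _ => (h.isPred_iff hlam hj).1⟩⟩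
  obtain ⟨hzero, hsum, hbox⟩ := (isPred_iff_mem_box hn hlam).1 hα
  obtain hlower | hupper | ⟨j, hj, hfree⟩ := eq_lower_or_eq_upper_or_forall_ne_eq_of_unique hbox
    fun β hβ hoff hβsum => huniq β <| (isPred_iff_mem_box hn hlam).2
      ⟨fun i hi => by rw [hoff i (by simpa using hi), hzero i hi], hβsum.trans hsum, hβ⟩
  · exact ⟨0, hn,
      isTwoBlock_zero_of_sum_predLower_eq hn hlam (Finset.sum_congr rfl hlower ▸ hsum)⟩
  · have hlast : lam n = t := by
      have hlam_sum := hlam.2.2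
      rw [Finset.sum_range_succ, ← Finset.sum_congr rfl hupper, hsum, Nat.mul_succ] at hlam_sum
      exact Nat.add_left_cancel hlam_sum
    exact ⟨0, hn, hlam.isTwoBlock_of_last_eq hlast 0⟩
  · refine ⟨j, Finset.mem_range.1 hj, fun i hi hij => ?_⟩
    have hside := hfree i (Finset.mem_range.2 hi) hij
    obtain rfl | hi0 := eq_or_ne i 0
    · have hhead := hlam.le_head
      rw [predLower_zero] at hside
      simp only [zero_add]
      omega
    · rwa [predLower_of_ne_zero hi0] at hside

theorem IsTwoBlock.zero_or_last_of_mergeAt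
    (h : IsTwoBlock (n + 1) j lam) (hlam : IsAdmissible t (n + 2) lam) (hj : j < n + 1) {k : ℕ}
    (hk : IsTwoBlock n k (mergeAt t j lam)) :
    IsTwoBlock (n + 1) 0 lam ∨ IsTwoBlock (n + 1) n lam := by
  obtain rfl | hj0 := Nat.eq_zero_or_pos j
  · exact .inl h
  obtain rfl | hjn := (Nat.le_of_lt_succ hj).eq_or_lt
  · exact .inr h
  obtain ⟨i, rfl⟩ := Nat.exists_eq_add_one.2 hj0
  have hfirst : lam (i + 1) = lam 0 := h.eq_head hj.le le_rfl
  have hlast : lam (i + 1 + 1) = lam (n + 1) := h.eq_last (by omega) (by omega)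
  have hge := hlam.le_head
  left
  obtain hki | hki : i ≠ k ∨ i + 1 ≠ k := by omega
  · have hstep := hk i (by omega) hki
    rw [mergeAt_self, mergeAt_of_lt i.lt_succ_self, ← h i (by omega) (by omega)] at hstep
    exact hlam.isTwoBlock_of_last_eq (by omega) 0
  · have hstep := hk (i + 1) hjn hki
    rw [mergeAt_self, mergeAt_of_gt (by omega), h (i + 1 + 1) (by omega) (by omega)] at hstep
    exact hlam.isTwoBlock_of_head_eq (by omega) 0

theorem IsTwoBlock.mergeAt_zero (h : IsTwoBlock (n + 1) 0 lam) :
    IsTwoBlock n 0 (mergeAt t 0 lam) := fun i hi hi0 => by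
  rw [mergeAt_of_gt (by omega), mergeAt_of_gt (by omega), h (i + 1) (by omega) (by omega)]

theorem IsTwoBlock.mergeAt_last (h : IsTwoBlock (n + 2) (n + 1) lam) :
    IsTwoBlock (n + 1) n (mergeAt t (n + 1) lam) := fun i hi hin => by
  rw [mergeAt_of_lt (by omega), mergeAt_of_lt (by omega), h i (by omega) (by omega)]

end Pred

/-- For a `(t,d)`-admissible partition `lam` with `d ≥ 3`, the following are equivalent:
(ii) `lam` has a unique `t`-predecessor, which in turn has a unique `t`-predecessor;
(iii) `λ₂ = λ₃ = … = λ_d` or `λ₁ = λ₂ = … = λ_{d−1}` (0-indexed: `lam i = lam 1` for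
`1 ≤ i < d`, or `lam i = lam 0` for `i < d − 1`). -/
theorem unique_two_step_pred_iff (t d : ℕ) (ht : 1 ≤ t) (hd : 3 ≤ d)
    (lam : ℕ → ℕ) (hadm : IsAdmissible t d lam) :
    (∃ α : ℕ → ℕ, IsPred t d α lam ∧ (∀ α', IsPred t d α' lam → α' = α) ∧
        (∃! β : ℕ → ℕ, IsPred t (d - 1) β α)) ↔
      ((∀ i, 1 ≤ i → i < d → lam i = lam 1) ∨ (∀ i, i < d - 1 → lam i = lam 0)) := by
  obtain ⟨n, rfl⟩ := Nat.exists_eq_add_of_le' hd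
  change _ ↔ (∀ i, 1 ≤ i → i < n + 2 + 1 → _) ∨ ∀ i, i < n + 1 + 1 → _
  rw [← isTwoBlock_zero_iff, ← isTwoBlock_last_iff]
  constructor
  · rintro ⟨α, hα, hα_unique, hβ⟩
    obtain ⟨j, hj, hlam⟩ := (existsUnique_isPred_iff ht (by omega) hadm).1 ⟨α, hα, hα_unique⟩
    obtain ⟨k, -, hmerge⟩ := (existsUnique_isPred_iff ht (by omega) hα.1).1 hβ
    rw [(hlam.isPred_iff hadm hj).1 hα] at hmerge
    exact hlam.zero_or_last_of_mergeAt hadm hj hmerge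
  · intro h
    obtain ⟨j, hj, hlam, k, hk, hmerge⟩ : ∃ j < n + 2, IsTwoBlock (n + 2) j lam ∧
        ∃ k < n + 1, IsTwoBlock (n + 1) k (mergeAt t j lam) := by
      obtain hfirst | hlast := h
      · exact ⟨0, by omega, hfirst, 0, by omega, hfirst.mergeAt_zero⟩
      · exact ⟨n + 1, by omega, hlast, n, by omega, hlast.mergeAt_last⟩
    have hpred := (hlam.isPred_iff hadm hj).2 rfl
    exact ⟨mergeAt t j lam, hpred, fun _ => (hlam.isPred_iff hadm hj).1,
      (existsUnique_isPred_iff ht (by omega) hpred.1).2 ⟨k, hk, hmerge⟩⟩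
end

section
/- Let t ≥ 1, d ≥ 3, and let γ and λ be distinct (t,d)-admissible partitions. Then the following are equivalent: (a) there is a partition α that is the unique t-predecessor of γ and also the unique t-predecessor of λ, and moreover the chain of iterated t-predecessors below α is everywhere unique (α has a unique t-predecessor, that partition in turn has a unique t-predecessor, and so on down to the partition (t) of degree 1); (b) d = 3 and {γ, λ} = {(t+u, t+u, t−2u), (t+2u, t−u, t−u)} for some integer u with 1 ≤ u ≤ ⌊t/2⌋. -/
/-- The partition `γ_u = (t+u, t+u, t−2u)`. -/
def gammaF (t u : ℕ) : ℕ → ℕ :=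
  fun i => if i = 0 then t + u else if i = 1 then t + u else if i = 2 then t - 2 * u else 0

/-- The partition `λ_u = (t+2u, t−u, t−u)`. -/
def lambdaF (t u : ℕ) : ℕ → ℕ :=
  fun i => if i = 0 then t + 2 * u else if i = 1 then t - u else if i = 2 then t - u else 0

/-- `UniqueChainBelow t e μ` says that the chain of iterated `t`-predecessors below the
degree-`e` partition `μ` is everywhere unique: `μ` has a unique `t`-predecessor, that
partition in turn has a unique `t`-predecessor, and so on down to degree 1, where the
only `(t,1)`-admissible partition is `(t)`. -/
def UniqueChainBelow (t : ℕ) : ℕ → (ℕ → ℕ) → Prop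
  | 0, _ => True
  | 1, _ => True
  | (e + 2), mu => ∃ nu : ℕ → ℕ, IsPred t (e + 2) nu mu ∧
      (∀ nu', IsPred t (e + 2) nu' mu → nu' = nu) ∧ UniqueChainBelow t (e + 1) nu

/-!
Consecutive parts of `λ` confine its `t`-predecessors to a box, in which they are the lattice points
of a prescribed coordinate sum. Such a lattice point `α` is unique only if no coordinate can be
lowered while a different one is raised. If `λ` has a descent and more than one part, then some
coordinate of `α` can be lowered and some can be raised, so both must be the same coordinate and no
other one can move. Since every descent of `λ` leaves room to move the coordinate of `α` at that
position, a partition with a unique predecessor has at most one descent: it is `(a^k, b^m)`, and its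
predecessor is `(a^(k-1), a+b-t, b^(m-1))`.

If `d ≥ 4`, then `α` has at least three entries and again at most one descent. For `b < t < a` this
forces `k = 1` or `m = 1`, and comparing `α₁` with `α₂` tells which, so that `α` determines `λ`.
If `d = 3`, then `γ_u` and `λ_u` are the only two partitions above `(t+u, t-u)`.
-/

open Finset

/-- The positions `i < n` (0-indexed) at which the sequence `lam` strictly decreases; for a
partition with at most `n + 1` parts, the drop from the last part to the zero padding is not
counted. -/
def descents (n : ℕ) (lam : ℕ → ℕ) : Set ℕ :=
  {i | i < n ∧ lam (i + 1) < lam i}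

/-- The partition `(a^k, b^m)`, with `k` parts equal to `a` followed by `m` parts equal to `b`. -/
def twoBlock (k m a b : ℕ) : ℕ → ℕ :=
  fun i => if i < k then a else if i < k + m then b else 0

/-- The coordinate `i` of the `t`-predecessor `α` of `lam` can be decreased by one without
violating the lower bounds that `lam` imposes on it; for `i = 0` these include `lam 0 ≤ α 0 + t`. -/
def IsLowerable (t : ℕ) (lam α : ℕ → ℕ) (i : ℕ) : Prop :=
  lam (i + 1) < α i ∧ (i = 0 → lam 0 < α 0 + t)

section Predecessors

variable {t n : ℕ} {α lam : ℕ → ℕ}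

lemma isPred_succ_iff :
    IsPred t (n + 1) α lam ↔
      (∀ i, lam (i + 1) ≤ α i ∧ α i ≤ lam i) ∧ lam 0 ≤ α 0 + t ∧
        (∀ i, n ≤ i → α i = 0) ∧ ∑ i ∈ range n, α i = t * n := by
  constructor
  · rintro ⟨⟨-, hzero, hsum⟩, hhead, hcap, hinter⟩
    refine ⟨fun i => ⟨(hinter (i + 1) i.succ_pos).2, ?_⟩, hcap, hzero, hsum⟩
    cases i with
    | zero => exact hhead
    | succ i => exact (hinter (i + 1) i.succ_pos).1
  · rintro ⟨hinter, hcap, hzero, hsum⟩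
    have hanti : Antitone α :=
      antitone_nat_of_succ_le fun i => (hinter (i + 1)).2.trans (hinter i).1
    refine ⟨⟨fun _ _ hij => hanti hij, hzero, hsum⟩, (hinter 0).2, hcap, fun i hi => ?_⟩
    obtain ⟨j, rfl⟩ := Nat.exists_eq_add_of_le' hi
    exact ⟨(hinter (j + 1)).2, (hinter j).1⟩

lemma IsPred.exists_ne {p q : ℕ} (hα : IsPred t (n + 1) α lam) (hp : p < n) (hq : q < n)
    (hpq : p ≠ q) (hlower : IsLowerable t lam α p) (hraise : α q < lam q) :
    ∃ β, IsPred t (n + 1) β lam ∧ β ≠ α := by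
  obtain ⟨hinter, hcap, hzero, hsum⟩ := isPred_succ_iff.1 hα
  obtain ⟨hlower, hlower_zero⟩ := hlower
  let β : ℕ → ℕ := fun i => if i = p then α p - 1 else if i = q then α q + 1 else α i
  have htransfer : ∀ i, β i + (if i = p then 1 else 0) = α i + (if i = q then 1 else 0) := by
    grind
  refine ⟨β, isPred_succ_iff.2 ⟨fun i => ?_, by grind, by grind, ?_⟩, by grind⟩
  · have := hinter i
    grind
  · have htotal := sum_congr rfl fun i (_ : i ∈ range n) => htransfer i
    rw [sum_add_distrib, sum_add_distrib, sum_ite_eq', sum_ite_eq', if_pos (mem_range.2 hp),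
      if_pos (mem_range.2 hq)] at htotal
    exact (Nat.add_right_cancel htotal).trans hsum

end Predecessors

section Admissible

variable {t n : ℕ} {α lam : ℕ → ℕ}

lemma IsAdmissible.eq_of_head_le {d i : ℕ} (hlam : IsAdmissible t d lam) (hhead : lam 0 ≤ t)
    (hi : i < d) : lam i = t := by
  obtain ⟨hanti, -, hsum⟩ := hlam
  have hconst : ∑ j ∈ range d, lam j = ∑ _j ∈ range d, t := by simp [hsum, mul_comm]
  exact (sum_eq_sum_iff_of_le fun j _ => (hanti j.zero_le).trans hhead).1 hconst i
    (mem_range.2 hi)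

lemma IsAdmissible.eq_of_le_last {i : ℕ} (hlam : IsAdmissible t (n + 1) lam) (hlast : t ≤ lam n)
    (hi : i ≤ n) : lam i = t := by
  obtain ⟨hanti, -, hsum⟩ := hlam
  have hconst : ∑ _j ∈ range (n + 1), t = ∑ j ∈ range (n + 1), lam j := by
    simp [hsum, mul_comm]
  exact ((sum_eq_sum_iff_of_le fun j hj =>
    hlast.trans (hanti (mem_range_succ_iff.1 hj))).1 hconst i (mem_range_succ_iff.2 hi)).symm

lemma IsAdmissible.ext_of_ne {d : ℕ} {mu : ℕ → ℕ} (hlam : IsAdmissible t d lam)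
    (hmu : IsAdmissible t d mu) (j : ℕ) (h : ∀ i < d, i ≠ j → lam i = mu i) : lam = mu := by
  obtain ⟨-, hlam_zero, hlam_sum⟩ := hlam
  obtain ⟨-, hmu_zero, hmu_sum⟩ := hmu
  funext i
  by_cases hid : i < d
  · by_cases hij : i = j
    · subst hij
      have hrest : ∑ l ∈ (range d).erase i, lam l = ∑ l ∈ (range d).erase i, mu l :=
        sum_congr rfl fun l hl =>
          h l (mem_range.1 (mem_of_mem_erase hl)) (ne_of_mem_erase hl)
      rw [← add_sum_erase _ _ (mem_range.2 hid)] at hlam_sum hmu_sum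
      omega
    · exact h i hid hij
  · rw [hlam_zero i (not_lt.1 hid), hmu_zero i (not_lt.1 hid)]

lemma IsAdmissible.exists_lt_of_descent {j : ℕ} (hlam : IsAdmissible t (n + 1) lam)
    (hα : IsPred t (n + 1) α lam) (hj : j ∈ descents n lam) : ∃ q < n, α q < lam q := by
  by_contra! hge
  obtain ⟨hinter, -, -, hsum⟩ := isPred_succ_iff.1 hα
  have hsame : ∑ i ∈ range n, lam i = ∑ i ∈ range n, α i :=
    sum_congr rfl fun i hi => (hge i (mem_range.1 hi)).antisymm (hinter i).2
  have hlast : t ≤ lam n := by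
    have := hlam.2.2
    rw [sum_range_succ, hsame, hsum, Nat.mul_succ] at this
    omega
  obtain ⟨hjn, hdrop⟩ := hj
  rw [hlam.eq_of_le_last hlast hjn.le, hlam.eq_of_le_last hlast hjn] at hdrop
  exact hdrop.false

lemma IsAdmissible.exists_isLowerable_of_descent {j : ℕ} (hlam : IsAdmissible t (n + 1) lam)
    (hα : IsPred t (n + 1) α lam) (hj : j ∈ descents n lam) (hlam_one : lam 1 ≠ 0) :
    ∃ p < n, IsLowerable t lam α p := by
  by_contra! hnone
  obtain ⟨hinter, hcap, -, hsum⟩ := isPred_succ_iff.1 hα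
  obtain ⟨hjn, hdrop⟩ := hj
  obtain ⟨m, rfl⟩ := Nat.exists_eq_add_one_of_ne_zero (Nat.ne_zero_of_lt hjn)
  have htail : ∑ i ∈ range m, α (i + 1) = ∑ i ∈ range m, lam (i + 1 + 1) := by
    refine sum_congr rfl fun i hi => ?_
    have := hnone (i + 1) (by simpa using hi)
    exact (not_lt.1 fun h => this ⟨h, by simp⟩).antisymm (hinter (i + 1)).1
  have hbalance : α 0 + t = lam 0 + lam 1 := by
    have hlam_sum := hlam.2.2
    rw [sum_range_succ', sum_range_succ', ← htail, zero_add, Nat.mul_succ] at hlam_sum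
    rw [sum_range_succ'] at hsum
    omega
  have hhead_fixed : ¬(lam 1 < α 0 ∧ lam 0 < α 0 + t) := fun h =>
    hnone 0 m.succ_pos ⟨h.1, fun _ => h.2⟩
  have hhead : lam 0 ≤ t := by
    have := (hinter 0).1
    omega
  rw [hlam.eq_of_head_le hhead (by omega), hlam.eq_of_head_le hhead (by omega)] at hdrop
  exact hdrop.false

theorem IsAdmissible.subsingleton_descents (ht : 0 < t) (hlam : IsAdmissible t (n + 1) lam)
    (hα : IsPred t (n + 1) α lam) (huniq : ∀ β, IsPred t (n + 1) β lam → β = α) :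
    (descents n lam).Subsingleton := by
  intro i hi j hj
  by_cases hlam_one : lam 1 = 0
  · have hvanish : ∀ l ∈ descents n lam, l = 0 := by
      intro l hl
      by_contra hl0
      have := hlam.1 (Nat.one_le_iff_ne_zero.2 hl0)
      have := hl.2
      omega
    rw [hvanish i hi, hvanish j hj]
  · obtain ⟨p, hp, hlower⟩ := hlam.exists_isLowerable_of_descent hα hi hlam_one
    obtain ⟨q, hq, hraise⟩ := hlam.exists_lt_of_descent hα hi
    have hexchange : ∀ p < n, ∀ q < n, IsLowerable t lam α p → α q < lam q → p = q := by
      intro p hp q hq hlower hraise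
      by_contra hpq
      obtain ⟨β, hβ, hne⟩ := hα.exists_ne hp hq hpq hlower hraise
      exact hne (huniq β hβ)
    have hmovable : ∀ l ∈ descents n lam, l = p := by
      rintro l ⟨hl, hdrop⟩
      rcases ((isPred_succ_iff.1 hα).1 l).2.lt_or_eq with hlt | heq
      · exact (hexchange p hp l hl hlower hlt).symm
      · have hl_lower : IsLowerable t lam α l := ⟨heq ▸ hdrop, by rintro rfl; omega⟩
        exact (hexchange l hl q hq hl_lower hraise).trans (hexchange p hp q hq hlower hraise).symm
    rw [hmovable i hi, hmovable j hj]

end Admissible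

section TwoBlock

variable {t k m a b : ℕ} {α lam : ℕ → ℕ}

lemma eq_left_of_forall_succ_eq {X : Type*} {f : ℕ → X} {u v : ℕ}
    (h : ∀ i, u ≤ i → i < v → f (i + 1) = f i) :
    ∀ i, u ≤ i → i ≤ v → f i = f u := by
  intro i hui
  induction i, hui using Nat.le_induction with
  | base => exact fun _ => rfl
  | succ i hui ih => exact fun hiv => (h i hui hiv).trans (ih (Nat.le_of_succ_le hiv))

theorem IsAdmissible.exists_eq_twoBlock {n : ℕ} (hlam : IsAdmissible t (n + 2) lam)
    (hdesc : (descents (n + 1) lam).Subsingleton) :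
    ∃ k m a b, k + m = n ∧ lam = twoBlock (k + 1) (m + 1) a b := by
  obtain ⟨hanti, hzero, -⟩ := hlam
  obtain ⟨k, hk, hflat⟩ : ∃ k ≤ n, ∀ i ≤ n, i ≠ k → lam (i + 1) = lam i := by
    rcases hdesc.eq_empty_or_singleton with hempty | ⟨k, hk⟩
    · refine ⟨0, n.zero_le, fun i hi _ => (hanti i.le_succ).eq_of_not_lt fun hlt => ?_⟩
      exact (hempty ▸ (⟨by omega, hlt⟩ : i ∈ descents (n + 1) lam) : i ∈ (∅ : Set ℕ))
    · have hk_mem : k ∈ descents (n + 1) lam := hk ▸ rfl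
      refine ⟨k, Nat.lt_succ_iff.1 hk_mem.1, fun i hi hik =>
        (hanti i.le_succ).eq_of_not_lt fun hlt => hik (hdesc ⟨by omega, hlt⟩ hk_mem)⟩
  have hfirst := eq_left_of_forall_succ_eq (f := lam) (u := 0) (v := k)
    fun i _ hi => hflat i (by omega) hi.ne
  have hsecond := eq_left_of_forall_succ_eq (f := lam) (u := k + 1) (v := n + 1)
    fun i hki hi => hflat i (by omega) (by omega)
  refine ⟨k, n - k, lam 0, lam (k + 1), by omega, funext fun i => ?_⟩
  unfold twoBlock
  split_ifs with hik hin
  · exact hfirst i i.zero_le (by omega)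
  · exact hsecond i (by omega) (by omega)
  · exact hzero i (by omega)

lemma sum_twoBlock (k m a b : ℕ) :
    ∑ i ∈ range (k + m), twoBlock k m a b i = k * a + m * b := by
  simp [sum_range_add, twoBlock, sum_ite_of_true]

lemma sum_update_twoBlock (k m a b c : ℕ) :
    ∑ i ∈ range (k + m + 1), Function.update (twoBlock k (m + 1) a b) k c i =
      k * a + c + m * b := by
  have hk : k ∈ range (k + m + 1) := mem_range.2 (by omega)
  have hsum := sum_twoBlock k (m + 1) a b
  have hk_entry : twoBlock k (m + 1) a b k = b := by simp [twoBlock]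
  rw [← add_assoc, ← add_sum_erase _ _ hk, hk_entry] at hsum
  rw [sum_update_of_mem hk, sdiff_singleton_eq_erase]
  linarith

lemma IsAdmissible.twoBlock_sum_eq (h : IsAdmissible t (k + m + 2) (twoBlock (k + 1) (m + 1) a b)) :
    (k + 1) * a + (m + 1) * b = t * (k + m + 2) := by
  rw [← sum_twoBlock, ← h.2.2]
  congr 2
  omega

lemma IsAdmissible.twoBlock_eq_or_lt
    (h : IsAdmissible t (k + m + 2) (twoBlock (k + 1) (m + 1) a b)) :
    (a = t ∧ b = t) ∨ (b < t ∧ t < a) := by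
  have hfirst : twoBlock (k + 1) (m + 1) a b 0 = a := by simp [twoBlock]
  have hlast : twoBlock (k + 1) (m + 1) a b (k + m + 1) = b := by
    simp only [twoBlock]
    split_ifs <;> omega
  by_cases ha : a ≤ t
  · exact .inl ⟨hfirst ▸ h.eq_of_head_le (hfirst.trans_le ha) (by omega),
      hlast ▸ h.eq_of_head_le (hfirst.trans_le ha) (by omega)⟩
  by_cases hb : t ≤ b
  · exact .inl ⟨hfirst ▸ h.eq_of_le_last (hb.trans_eq hlast.symm) (by omega),
      hlast ▸ h.eq_of_le_last (hb.trans_eq hlast.symm) le_rfl⟩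
  exact .inr ⟨not_le.1 hb, not_le.1 ha⟩

theorem IsAdmissible.isPred_twoBlock_iff
    (h : IsAdmissible t (k + m + 2) (twoBlock (k + 1) (m + 1) a b)) :
    IsPred t (k + m + 2) α (twoBlock (k + 1) (m + 1) a b) ↔
      α = Function.update (twoBlock k (m + 1) a b) k (a + b - t) := by
  have hsum := h.twoBlock_sum_eq
  have hbounds := h.twoBlock_eq_or_lt
  rw [isPred_succ_iff]
  constructor
  · rintro ⟨hinter, -, hzero, hα_sum⟩
    have hoff : α = Function.update (twoBlock k (m + 1) a b) k (α k) := by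
      rw [Function.eq_update_iff]
      refine ⟨rfl, fun i hik => ?_⟩
      have := hinter i
      have := hzero i
      grind [twoBlock]
    have hmiddle : α k + t = a + b := by
      rw [hoff, sum_update_twoBlock] at hα_sum
      linarith
    rwa [← hmiddle, Nat.add_sub_cancel]
  · rintro rfl
    refine ⟨fun i => ?_, ?_, fun i hi => ?_, ?_⟩
    · grind [twoBlock]
    · grind [twoBlock]
    · grind [twoBlock]
    · rw [sum_update_twoBlock]
      zify [show t ≤ a + b by omega] at hsum ⊢
      linarith

end TwoBlock

section HighDegree

variable {t n : ℕ} {α lam mu : ℕ → ℕ}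

lemma IsAdmissible.eq_head_or_eq_second_of_isPred (hn : 2 ≤ n) (hlam : IsAdmissible t (n + 2) lam)
    (hlam_desc : (descents (n + 1) lam).Subsingleton) (hα : IsPred t (n + 2) α lam)
    (hα_desc : (descents n α).Subsingleton) :
    (α 0 = α 1 ∧ ∀ i < n + 1, lam i = α 0) ∨
      (α 1 < α 0 ∧ ∀ i < n + 2, i ≠ 0 → lam i = α 1) := by
  obtain ⟨k, m, a, b, rfl, rfl⟩ := hlam.exists_eq_twoBlock hlam_desc
  have hα_apply : ∀ i, α i = if i = k then a + b - t else twoBlock k (m + 1) a b i := fun i => by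
    rw [hlam.isPred_twoBlock_iff.1 hα, Function.update_apply]
  rcases hlam.twoBlock_eq_or_lt with ⟨rfl, rfl⟩ | ⟨hb, ha⟩
  · grind [twoBlock]
  have hend : k = 0 ∨ m = 0 := by
    by_contra! hkm
    have hbefore : k - 1 ∈ descents (k + m) α := ⟨by omega, by grind [twoBlock]⟩
    have hafter : k ∈ descents (k + m) α := ⟨by omega, by grind [twoBlock]⟩
    have := hα_desc hbefore hafter
    omega
  rcases hend with rfl | rfl <;> grind [twoBlock]

theorem IsAdmissible.eq_of_common_isPred (hn : 2 ≤ n) (hlam : IsAdmissible t (n + 2) lam)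
    (hmu : IsAdmissible t (n + 2) mu) (hlam_desc : (descents (n + 1) lam).Subsingleton)
    (hmu_desc : (descents (n + 1) mu).Subsingleton) (hlam_pred : IsPred t (n + 2) α lam)
    (hmu_pred : IsPred t (n + 2) α mu) (hα_desc : (descents n α).Subsingleton) :
    lam = mu := by
  rcases hlam.eq_head_or_eq_second_of_isPred hn hlam_desc hlam_pred hα_desc with
      ⟨hα, hl⟩ | ⟨hα, hl⟩ <;>
    rcases hmu.eq_head_or_eq_second_of_isPred hn hmu_desc hmu_pred hα_desc with
      ⟨hα', hm⟩ | ⟨hα', hm⟩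
  · exact hlam.ext_of_ne hmu (n + 1) fun i hi hne =>
      (hl i (by omega)).trans (hm i (by omega)).symm
  · omega
  · omega
  · exact hlam.ext_of_ne hmu 0 fun i hi hne => (hl i hi hne).trans (hm i hi hne).symm

end HighDegree

section DegreeThree

variable {t u : ℕ} {α lam mu : ℕ → ℕ}

lemma gammaF_eq_twoBlock (t u : ℕ) : gammaF t u = twoBlock 2 1 (t + u) (t - 2 * u) := by
  funext i
  simp only [gammaF, twoBlock]
  split_ifs <;> omega

lemma lambdaF_eq_twoBlock (t u : ℕ) : lambdaF t u = twoBlock 1 2 (t + 2 * u) (t - u) := by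
  funext i
  simp only [lambdaF, twoBlock]
  split_ifs <;> omega

lemma gammaF_zero_eq_lambdaF_zero (t : ℕ) : gammaF t 0 = lambdaF t 0 := by
  funext i
  simp [gammaF, lambdaF]

lemma IsAdmissible.two_mul_le_of_gammaF (h : IsAdmissible t 3 (gammaF t u)) : 2 * u ≤ t := by
  rw [gammaF_eq_twoBlock] at h
  have := h.twoBlock_sum_eq (k := 1) (m := 0)
  omega

lemma IsAdmissible.isPred_gammaF_iff (h : IsAdmissible t 3 (gammaF t u)) :
    IsPred t 3 α (gammaF t u) ↔ α = twoBlock 1 1 (t + u) (t - u) := by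
  have hu := h.two_mul_le_of_gammaF
  rw [gammaF_eq_twoBlock] at h ⊢
  rw [h.isPred_twoBlock_iff (k := 1) (m := 0)]
  suffices heq : Function.update (twoBlock 1 1 (t + u) (t - 2 * u)) 1 (t + u + (t - 2 * u) - t) =
      twoBlock 1 1 (t + u) (t - u) by rw [← heq]
  funext i
  grind [twoBlock]

lemma IsAdmissible.isPred_lambdaF_iff (h : IsAdmissible t 3 (lambdaF t u)) :
    IsPred t 3 α (lambdaF t u) ↔ α = twoBlock 1 1 (t + u) (t - u) := by
  rw [lambdaF_eq_twoBlock] at h ⊢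
  have hsum := h.twoBlock_sum_eq (k := 0) (m := 1)
  rw [h.isPred_twoBlock_iff (k := 0) (m := 1)]
  suffices heq : Function.update (twoBlock 0 2 (t + 2 * u) (t - u)) 0 (t + 2 * u + (t - u) - t) =
      twoBlock 1 1 (t + u) (t - u) by rw [← heq]
  funext i
  grind [twoBlock]

lemma IsAdmissible.uniqueChainBelow_two (h : IsAdmissible t 2 lam) : UniqueChainBelow t 2 lam := by
  have hdesc : (descents 1 lam).Subsingleton := fun i hi j hj => by
    rw [Nat.lt_one_iff.1 hi.1, Nat.lt_one_iff.1 hj.1]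
  obtain ⟨k, m, a, b, hkm, rfl⟩ := h.exists_eq_twoBlock hdesc
  obtain ⟨rfl, rfl⟩ := Nat.add_eq_zero_iff.1 hkm
  exact ⟨_, h.isPred_twoBlock_iff.2 rfl, fun _ => h.isPred_twoBlock_iff.1, trivial⟩

lemma IsAdmissible.eq_gammaF_or_eq_lambdaF (hlam : IsAdmissible t 3 lam)
    (hdesc : (descents 2 lam).Subsingleton) (hα : IsPred t 3 α lam) :
    lam = gammaF t (α 0 - t) ∨ lam = lambdaF t (α 0 - t) := by
  obtain ⟨k, m, a, b, hkm, rfl⟩ := hlam.exists_eq_twoBlock hdesc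
  obtain ⟨rfl, rfl⟩ | ⟨rfl, rfl⟩ : (k = 1 ∧ m = 0) ∨ (k = 0 ∧ m = 1) := by omega
  · left
    have hsum := hlam.twoBlock_sum_eq
    have hbounds := hlam.twoBlock_eq_or_lt
    have hα_head : α 0 = a := by simp [hlam.isPred_twoBlock_iff.1 hα, twoBlock]
    rw [gammaF_eq_twoBlock, hα_head]
    congr 1 <;> omega
  · right
    have hsum := hlam.twoBlock_sum_eq
    have hbounds := hlam.twoBlock_eq_or_lt
    have hα_head : α 0 = a + b - t := by simp [hlam.isPred_twoBlock_iff.1 hα]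
    rw [lambdaF_eq_twoBlock, hα_head]
    congr 1 <;> omega

lemma exists_gammaF_lambdaF_of_common_isPred (hlam : IsAdmissible t 3 lam)
    (hmu : IsAdmissible t 3 mu) (hlam_desc : (descents 2 lam).Subsingleton)
    (hmu_desc : (descents 2 mu).Subsingleton) (hlam_pred : IsPred t 3 α lam)
    (hmu_pred : IsPred t 3 α mu) (hne : lam ≠ mu) :
    ∃ u, 1 ≤ u ∧ u ≤ t / 2 ∧
      ((lam = gammaF t u ∧ mu = lambdaF t u) ∨ (lam = lambdaF t u ∧ mu = gammaF t u)) := by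
  have hlam_or := hlam.eq_gammaF_or_eq_lambdaF hlam_desc hlam_pred
  have hmu_or := hmu.eq_gammaF_or_eq_lambdaF hmu_desc hmu_pred
  generalize α 0 - t = u at hlam_or hmu_or
  have hpos : 1 ≤ u := by
    refine Nat.one_le_iff_ne_zero.2 ?_
    rintro rfl
    rw [gammaF_zero_eq_lambdaF_zero, or_self] at hlam_or hmu_or
    exact hne (hlam_or.trans hmu_or.symm)
  rcases hlam_or with rfl | rfl <;> rcases hmu_or with rfl | rfl
  · exact absurd rfl hne
  · have := hlam.two_mul_le_of_gammaF
    exact ⟨u, hpos, by omega, .inl ⟨rfl, rfl⟩⟩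
  · have := hmu.two_mul_le_of_gammaF
    exact ⟨u, hpos, by omega, .inr ⟨rfl, rfl⟩⟩
  · exact absurd rfl hne

end DegreeThree

/-- Classification of `T`-shape relations of degree `d ≥ 3`: for distinct
`(t,d)`-admissible partitions `γ ≠ λ`, there is a common unique `t`-predecessor `α` of
both `γ` and `λ` whose chain of iterated `t`-predecessors is everywhere unique down to
the partition `(t)`, if and only if `d = 3` and `{γ, λ} = {γ_u, λ_u}` for some
`1 ≤ u ≤ ⌊t/2⌋`, where `γ_u = (t+u, t+u, t−2u)` and `λ_u = (t+2u, t−u, t−u)`. -/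
theorem T_shape_relations_classification (t d : ℕ) (ht : 1 ≤ t) (hd : 3 ≤ d)
    (gam lam : ℕ → ℕ) (hgam : IsAdmissible t d gam) (hlam : IsAdmissible t d lam)
    (hne : gam ≠ lam) :
    (∃ α : ℕ → ℕ, IsPred t d α gam ∧ (∀ α', IsPred t d α' gam → α' = α) ∧
        IsPred t d α lam ∧ (∀ α', IsPred t d α' lam → α' = α) ∧
        UniqueChainBelow t (d - 1) α) ↔
      (d = 3 ∧ ∃ u, 1 ≤ u ∧ u ≤ t / 2 ∧
        ((gam = gammaF t u ∧ lam = lambdaF t u) ∨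
          (gam = lambdaF t u ∧ lam = gammaF t u))) := by
  constructor
  · rintro ⟨α, hgam_pred, hgam_uniq, hlam_pred, hlam_uniq, hchain⟩
    obtain ⟨n, rfl⟩ := Nat.exists_eq_add_of_le' hd
    have hgam_desc := hgam.subsingleton_descents ht hgam_pred hgam_uniq
    have hlam_desc := hlam.subsingleton_descents ht hlam_pred hlam_uniq
    rcases n.eq_zero_or_pos with rfl | hn
    · exact ⟨rfl, exists_gammaF_lambdaF_of_common_isPred hgam hlam hgam_desc hlam_desc
        hgam_pred hlam_pred hne⟩
    · obtain ⟨β, hβ, hβ_uniq, -⟩ := hchain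
      have hα_desc := hgam_pred.1.subsingleton_descents ht hβ hβ_uniq
      exact absurd (hgam.eq_of_common_isPred (n := n + 1) (by omega) hlam hgam_desc hlam_desc
        hgam_pred hlam_pred hα_desc) hne
  · rintro ⟨rfl, u, -, -, ⟨rfl, rfl⟩ | ⟨rfl, rfl⟩⟩
    · have hα := hgam.isPred_gammaF_iff.2 rfl
      exact ⟨_, hα, fun _ => hgam.isPred_gammaF_iff.1, hlam.isPred_lambdaF_iff.2 rfl,
        fun _ => hlam.isPred_lambdaF_iff.1, hα.1.uniqueChainBelow_two⟩
    · have hα := hgam.isPred_lambdaF_iff.2 rfl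
      exact ⟨_, hα, fun _ => hgam.isPred_lambdaF_iff.1, hlam.isPred_gammaF_iff.2 rfl,
        fun _ => hlam.isPred_gammaF_iff.1, hα.1.uniqueChainBelow_two⟩
end
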